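/- arXiv:2506.11519 — 4 statements merged into one kernel-verified Lean document; each statement's English description precedes it below -/
import Mathlib

section
/- Let T > 0, 0 < α < 1, and let v : [0,T] → ℝ be absolutely continuous. Then for almost every t ∈ (0,T], (1/2) D^α(v²)(t) ≤ v(t) · D^α v(t), where v² denotes the function t ↦ v(t)² (which is absolutely continuous). -/
/-!
For fixed `t`, the claim is `0 ≤ ∫₀ᵗ K D v'`, where `K τ = (t - τ)^(-α)` and `D τ = v t - v τ`.
Since `D' = -v'`, the product `H = K D²` is absolutely continuous on `[0, b]` for each `b < t`,
with `H' = K' D² - 2 K D v' ≥ -2 K D v'` because `K` is increasing. Integrating gives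
`2 ∫₀ᵇ K D v' ≥ H 0 - H b ≥ -H b` (`neg_le_integral_kernel`).

The boundary term vanishes as `b → t` whenever `K v'` is integrable on `(0, t)`:
`K b |D b| ≤ ∫_b^t K |v'|` stays bounded while `D b → 0` (`integral_kernel_nonneg`). That
integrability holds for almost every `t`, as `∫₀ᵗ K v'` is the convolution at `t` of the
integrable functions `x ^ (-α)` on `(0, T]` and `v'` on `(0, T)` (`ae_intervalIntegrable_kernel`).
-/

open MeasureTheory Real

/-- Caputo fractional derivative of order `α ∈ (0,1)` of an absolutely continuous
function whose a.e. derivative is `v'`: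
`D^α v (t) = (1/Γ(1-α)) ∫_0^t (t-τ)^{-α} v' τ dτ`. -/
noncomputable def caputo (α : ℝ) (v' : ℝ → ℝ) (t : ℝ) : ℝ :=
  (1 / Real.Gamma (1 - α)) * ∫ τ in (0:ℝ)..t, (t - τ) ^ (-α) * v' τ

open Set Filter Topology

/-- Truncated form of the inequality: on `[0, b]` with `b < t` the kernel is smooth, and only the
boundary term at `b` is lost. -/
lemma neg_le_integral_kernel {α t b : ℝ} (hα : 0 < α) (hb : 0 ≤ b) (hbt : b < t)
    {v v' : ℝ → ℝ} (hv' : IntervalIntegrable v' volume 0 t)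
    (hv : ∀ s ∈ Icc (0 : ℝ) t, v s = v 0 + ∫ r in (0 : ℝ)..s, v' r) :
    -((t - b) ^ (-α) * ((v t - v b) * (v t - v b)) / 2) ≤
      ∫ τ in (0 : ℝ)..b, (t - τ) ^ (-α) * ((v t - v τ) * v' τ) := by
  have ht : 0 < t := hb.trans_lt hbt
  have hv'b : IntervalIntegrable v' volume 0 b :=
    hv'.mono_set (by rw [uIcc_of_le hb, uIcc_of_le ht.le]; exact Icc_subset_Icc_right hbt.le)
  -- `D` agrees with `v t - v` on `[0, t]`, but is defined by the integral everywhere.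
  set D : ℝ → ℝ := fun τ => (v t - v 0) - ∫ r in (0 : ℝ)..τ, v' r with hD
  have hDv : ∀ s ∈ Icc (0 : ℝ) t, v t - v s = D s := fun s hs => by
    simp only [hD]; rw [hv s hs]; ring
  have hDac : AbsolutelyContinuousOnInterval D 0 b := by
    have h1 : AbsolutelyContinuousOnInterval (fun _ : ℝ => v t - v 0) 0 b :=
      contDiffOn_const.absolutelyContinuousOnInterval
    exact h1.sub (hv'b.absolutelyContinuousOnInterval_intervalIntegral (by simp))
  have hKder : ∀ τ ∈ Icc (0 : ℝ) b,
      HasDerivAt (fun τ : ℝ => (t - τ) ^ (-α)) (α * (t - τ) ^ (-α - 1)) τ := fun τ hτ => by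
    have h0 : t - τ ≠ 0 := by have := hτ.2; intro h; linarith
    have h1 : HasDerivAt (fun τ : ℝ => t - τ) (-1) τ := by
      simpa using (hasDerivAt_id τ).const_sub t
    convert h1.rpow_const (p := -α) (Or.inl h0) using 1
    ring
  have hKac : AbsolutelyContinuousOnInterval (fun τ : ℝ => (t - τ) ^ (-α)) 0 b := by
    apply ContDiffOn.absolutelyContinuousOnInterval
    rw [uIcc_of_le hb]
    apply ContDiffOn.rpow_const_of_ne
    · fun_prop
    · intro τ hτ h
      have := hτ.2
      linarith
  have hH := hKac.mul (hDac.mul hDac)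
  set H : ℝ → ℝ := (fun τ : ℝ => (t - τ) ^ (-α)) * (D * D) with hHdef
  have hFTC := hH.integral_deriv_eq_sub
  have hHint := hH.intervalIntegrable_deriv
  have hcont : ContinuousOn (fun τ => -2 * ((t - τ) ^ (-α) * D τ)) (uIcc 0 b) :=
    continuousOn_const.mul (hKac.continuousOn.mul hDac.continuousOn)
  have hgint := hv'b.continuousOn_mul hcont
  have hmono : ∫ τ in (0 : ℝ)..b, -2 * ((t - τ) ^ (-α) * D τ) * v' τ ≤
      ∫ τ in (0 : ℝ)..b, deriv H τ := by
    apply intervalIntegral.integral_mono_ae_restrict hb hgint hHint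
    filter_upwards [ae_restrict_mem measurableSet_Icc,
      ae_restrict_of_ae hv'b.ae_hasDerivAt_integral] with τ hτ hder
    have hτ' : τ ∈ uIcc 0 b := by rwa [uIcc_of_le hb]
    have hDd : HasDerivAt D (-v' τ) τ := by
      simpa [hD] using (hder hτ' 0 (by simp)).const_sub (v t - v 0)
    have hHd := (hKder τ hτ).mul (hDd.mul hDd)
    rw [hHd.deriv]
    have hpos : 0 ≤ α * (t - τ) ^ (-α - 1) * (D τ * D τ) := by
      have : 0 ≤ t - τ := by have := hτ.2; linarith
      have := mul_self_nonneg (D τ)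
      positivity
    simp only [Pi.mul_apply]
    linarith
  have hH0 : 0 ≤ H 0 := by
    simp only [hHdef, Pi.mul_apply]
    exact mul_nonneg (rpow_nonneg (by linarith) _) (mul_self_nonneg _)
  have hcongr : ∫ τ in (0 : ℝ)..b, -2 * ((t - τ) ^ (-α) * D τ) * v' τ =
      -2 * ∫ τ in (0 : ℝ)..b, (t - τ) ^ (-α) * ((v t - v τ) * v' τ) := by
    rw [← intervalIntegral.integral_const_mul]
    apply intervalIntegral.integral_congr
    intro τ hτ
    rw [uIcc_of_le hb] at hτ
    simp only [hDv τ ⟨hτ.1, hτ.2.trans hbt.le⟩]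
    ring
  have hHb : H b = (t - b) ^ (-α) * ((v t - v b) * (v t - v b)) := by
    rw [hDv b ⟨hb, hbt.le⟩]; rfl
  linarith

/-- The inequality at every `t` where `τ ↦ (t - τ)^(-α) v' τ` is integrable on `(0, t)`. -/
lemma integral_kernel_nonneg {α t : ℝ} (hα : 0 < α) (ht : 0 < t)
    {v v' : ℝ → ℝ} (hv' : IntervalIntegrable v' volume 0 t)
    (hv : ∀ s ∈ Icc (0 : ℝ) t, v s = v 0 + ∫ r in (0 : ℝ)..s, v' r)
    (hvc : ContinuousOn v (Icc 0 t))
    (hK : IntervalIntegrable (fun τ => (t - τ) ^ (-α) * v' τ) volume 0 t) :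
    0 ≤ ∫ τ in (0 : ℝ)..t, (t - τ) ^ (-α) * ((v t - v τ) * v' τ) := by
  have hint : IntervalIntegrable (fun τ => (t - τ) ^ (-α) * ((v t - v τ) * v' τ)) volume 0 t := by
    have hc : ContinuousOn (fun τ => v t - v τ) (uIcc 0 t) := by
      rw [uIcc_of_le ht.le]; exact continuousOn_const.sub hvc
    refine (hK.continuousOn_mul hc).congr (fun τ _ => ?_)
    ring
  set C : ℝ := ∫ τ in (0 : ℝ)..t, |(t - τ) ^ (-α) * v' τ| with hC
  -- The kernel is increasing, so `K b |v t - v b| ≤ ∫_b^t K |v'| ≤ C`.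
  have hbound : ∀ b ∈ Ico (0 : ℝ) t, (t - b) ^ (-α) * |v t - v b| ≤ C := by
    intro b hb
    have hsub : uIcc b t ⊆ uIcc 0 t := by
      rw [uIcc_of_le hb.2.le, uIcc_of_le ht.le]; exact Icc_subset_Icc_left hb.1
    have hsub' : uIcc 0 b ⊆ uIcc 0 t := by
      rw [uIcc_of_le hb.1, uIcc_of_le ht.le]; exact Icc_subset_Icc_right hb.2.le
    have hdiff : v t - v b = ∫ r in b..t, v' r := by
      rw [hv t ⟨ht.le, le_rfl⟩, hv b ⟨hb.1, hb.2.le⟩,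
        ← intervalIntegral.integral_add_adjacent_intervals (hv'.mono_set hsub')
          (hv'.mono_set hsub)]
      ring
    have hCsplit : ∫ τ in b..t, |(t - τ) ^ (-α) * v' τ| ≤ C := by
      rw [hC, ← intervalIntegral.integral_add_adjacent_intervals (hK.abs.mono_set hsub')
          (hK.abs.mono_set hsub)]
      have := intervalIntegral.integral_nonneg (μ := volume) hb.1
        (fun τ _ => abs_nonneg ((t - τ) ^ (-α) * v' τ))
      linarith
    refine le_trans ?_ hCsplit
    have hKb : 0 ≤ (t - b) ^ (-α) := rpow_nonneg (by linarith [hb.2]) _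
    calc (t - b) ^ (-α) * |v t - v b|
        ≤ (t - b) ^ (-α) * ∫ r in b..t, |v' r| := by
          rw [hdiff]
          exact mul_le_mul_of_nonneg_left
            (intervalIntegral.abs_integral_le_integral_abs hb.2.le) hKb
      _ = ∫ r in b..t, (t - b) ^ (-α) * |v' r| := by
          rw [intervalIntegral.integral_const_mul]
      _ ≤ ∫ τ in b..t, |(t - τ) ^ (-α) * v' τ| := by
          apply intervalIntegral.integral_mono_on_of_le_Ioo hb.2.le
            ((hv'.mono_set hsub).abs.const_mul _) (hK.abs.mono_set hsub)
          intro τ hτ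
          have h1 : 0 < t - τ := by linarith [hτ.2]
          rw [abs_mul, abs_of_nonneg (rpow_nonneg h1.le _)]
          exact mul_le_mul_of_nonneg_right
            (rpow_le_rpow_of_nonpos h1 (by linarith [hτ.1]) (by linarith)) (abs_nonneg _)
  have hle : ∀ b ∈ Ico (0 : ℝ) t, -(C * |v t - v b| / 2) ≤
      ∫ τ in (0 : ℝ)..b, (t - τ) ^ (-α) * ((v t - v τ) * v' τ) := by
    intro b hb
    refine le_trans ?_ (neg_le_integral_kernel hα hb.1 hb.2 hv' hv)
    have h := mul_le_mul_of_nonneg_right (hbound b hb) (abs_nonneg (v t - v b))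
    rw [mul_assoc, abs_mul_abs_self] at h
    linarith
  have hsubset : Ico 0 t ⊆ Icc 0 t := Ico_subset_Icc_self
  have hlimR : Tendsto (fun b => ∫ τ in (0 : ℝ)..b, (t - τ) ^ (-α) * ((v t - v τ) * v' τ))
      (𝓝[Ico 0 t] t) (𝓝 (∫ τ in (0 : ℝ)..t, (t - τ) ^ (-α) * ((v t - v τ) * v' τ))) := by
    have := intervalIntegral.continuousOn_primitive_interval' hint (a := 0) (by simp)
    rw [uIcc_of_le ht.le] at this
    exact (this t ⟨ht.le, le_rfl⟩).mono hsubset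
  have hlimL : Tendsto (fun b => -(C * |v t - v b| / 2)) (𝓝[Ico 0 t] t) (𝓝 0) := by
    have h1 : Tendsto v (𝓝[Ico 0 t] t) (𝓝 (v t)) := (hvc t ⟨ht.le, le_rfl⟩).mono hsubset
    have h2 := ((((tendsto_const_nhds (x := v t)).sub h1).abs.const_mul C).div_const 2).neg
    simpa using h2
  have : (𝓝[Ico 0 t] t).NeBot := by
    rw [← mem_closure_iff_nhdsWithin_neBot, closure_Ico ht.ne]
    exact ⟨ht.le, le_rfl⟩
  exact le_of_tendsto_of_tendsto hlimL hlimR (eventually_mem_nhdsWithin.mono hle)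

lemma ae_intervalIntegrable_kernel {T α : ℝ} (hT : 0 < T) (hα1 : α < 1) {v' : ℝ → ℝ}
    (hv' : IntegrableOn v' (Ioo 0 T)) :
    ∀ᵐ t, t ∈ Ioc (0 : ℝ) T →
      IntervalIntegrable (fun τ => (t - τ) ^ (-α) * v' τ) volume 0 t := by
  have hf : Integrable ((Ioo 0 T).indicator v') :=
    (integrable_indicator_iff measurableSet_Ioo).2 hv'
  have hg : Integrable ((Ioc 0 T).indicator fun x : ℝ => x ^ (-α)) := by
    rw [integrable_indicator_iff measurableSet_Ioc,
      ← intervalIntegrable_iff_integrableOn_Ioc_of_le hT.le]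
    exact intervalIntegral.intervalIntegrable_rpow' (by linarith)
  filter_upwards [hf.ae_convolution_exists (ContinuousLinearMap.mul ℝ ℝ) hg] with t h ht
  rw [intervalIntegrable_iff_integrableOn_Ioo_of_le ht.1.le]
  refine h.integrableOn.congr_fun (fun τ hτ => ?_) measurableSet_Ioo
  have h1 : τ ∈ Ioo 0 T := ⟨hτ.1, hτ.2.trans_le ht.2⟩
  have h2 : t - τ ∈ Ioc 0 T := ⟨by linarith [hτ.2], by linarith [hτ.1, ht.2]⟩
  simp [indicator_of_mem h1, indicator_of_mem h2, mul_comm]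

/-- Alikhanov's inequality (scalar case): for `0 < α < 1` and `v` absolutely
continuous on `[0,T]` (with a.e. derivative `v'`), the function `v²` is
absolutely continuous with a.e. derivative `2 v v'`, and for a.e. `t ∈ (0,T]`
one has `(1/2) D^α (v²) (t) ≤ v t * D^α v (t)`. -/
theorem caputo_sq_le (T α : ℝ) (hT : 0 < T) (hα : 0 < α) (hα1 : α < 1)
    (v v' : ℝ → ℝ) (hv' : IntegrableOn v' (Set.Ioo 0 T))
    (hv : ∀ t ∈ Set.Icc (0:ℝ) T, v t = v 0 + ∫ s in (0:ℝ)..t, v' s) :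
    ∀ᵐ t ∂(volume.restrict (Set.Ioc (0:ℝ) T)),
      (1 / 2) * caputo α (fun s => 2 * v s * v' s) t ≤ v t * caputo α v' t := by
  rw [ae_restrict_iff' measurableSet_Ioc]
  filter_upwards [ae_intervalIntegrable_kernel hT hα1 hv'] with t hK ht
  specialize hK ht
  have hv'T : IntervalIntegrable v' volume 0 T :=
    (intervalIntegrable_iff_integrableOn_Ioo_of_le hT.le).2 hv'
  have hvc : ContinuousOn v (Icc 0 t) := by
    have h := intervalIntegral.continuousOn_primitive_interval' hv'T (a := 0) (by simp)
    rw [uIcc_of_le hT.le] at h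
    exact ((continuousOn_const.add h).congr hv).mono (Icc_subset_Icc_right ht.2)
  have hv't : IntervalIntegrable v' volume 0 t :=
    hv'T.mono_set (by rw [uIcc_of_le ht.1.le, uIcc_of_le hT.le]; exact Icc_subset_Icc_right ht.2)
  have hmain := integral_kernel_nonneg hα ht.1 hv't
    (fun s hs => hv s ⟨hs.1, hs.2.trans ht.2⟩) hvc hK
  have hKv : IntervalIntegrable (fun τ => v τ * ((t - τ) ^ (-α) * v' τ)) volume 0 t :=
    hK.continuousOn_mul (by rwa [uIcc_of_le ht.1.le])
  have hsplit : ∫ τ in (0 : ℝ)..t, (t - τ) ^ (-α) * ((v t - v τ) * v' τ) =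
      v t * (∫ τ in (0 : ℝ)..t, (t - τ) ^ (-α) * v' τ) -
        ∫ τ in (0 : ℝ)..t, v τ * ((t - τ) ^ (-α) * v' τ) := by
    rw [← intervalIntegral.integral_const_mul,
      ← intervalIntegral.integral_sub (hK.const_mul _) hKv]
    congr 1
    funext τ
    ring
  have hsq : ∫ τ in (0 : ℝ)..t, (t - τ) ^ (-α) * (2 * v τ * v' τ) =
      2 * ∫ τ in (0 : ℝ)..t, v τ * ((t - τ) ^ (-α) * v' τ) := by
    rw [← intervalIntegral.integral_const_mul]
    congr 1
    funext τ
    ring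
  have hΓ : 0 < 1 / Real.Gamma (1 - α) := one_div_pos.2 (Real.Gamma_pos_of_pos (by linarith))
  rw [hsplit] at hmain
  unfold caputo
  rw [hsq]
  linarith [mul_nonneg hΓ.le hmain]
end

section
/- Let T > 0, 0 < α < 1, c₁ > 0, let c₂ : [0,T] → ℝ be a nonnegative integrable function, and let v : [0,T] → ℝ be absolutely continuous, positive, and satisfy D^α v(t) ≤ c₁ v(t) + c₂(t) for almost every t ∈ (0,T]. Then for almost every t ∈ [0,T], v(t) ≤ v(0) · E_α(c₁ t^α) + Γ(α) · E_{α,α}(c₁ t^α) · J^α c₂(t). -/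
/-!
Extend everything by zero to the line and work with `ℝ≥0∞`-valued functions, so that the fractional
integral `J^a` becomes convolution with the kernel `x₊^(a-1) / Γ(a)` and needs no integrability
assumptions. The semigroup law `J^a J^b = J^(a+b)` is then associativity of convolution together
with the Beta integral (`rlKernel_lconvolution`).

Since `D^α v = J^(1-α) v'`, applying `J^α` to the hypothesis gives the Volterra inequality
`v ≤ v(0) + J^α c₂ + c₁ J^α v` (`volterra_of_caputo_le`). Iterating it `n` times
(`volterra_iterate`) yields
`v ≤ ∑_{j<n} c₁^j (v(0) t^(αj) / Γ(αj+1) + J^(αj+α) c₂) + c₁^n M t^(αn) / Γ(αn+1)`,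
where `M` bounds `v`. Because `(t-τ)^(αj) ≤ t^(αj)`, the term `J^(αj+α) c₂` is at most
`t^(αj) Γ(α) / Γ(αj+α) · J^α c₂` (`rlKernel_lconvolution_posExt_le`). Letting `n → ∞`, the sums
become the two Mittag-Leffler functions and the remainder vanishes, since the Mittag-Leffler series
converges (`summable_mittagLeffler`). The value `J^α c₂(t)` is finite for almost every `t`
(`ae_lconvolution_ne_top`); only at such `t` does the real integral in the statement carry the
information.
-/

open MeasureTheory Real

/-- Riemann–Liouville fractional integral of order `α` (with base point `0`). -/
noncomputable def rlInt (α : ℝ) (v : ℝ → ℝ) (t : ℝ) : ℝ :=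
  (1 / Real.Gamma α) * ∫ τ in (0:ℝ)..t, (t - τ) ^ (α - 1) * v τ

/-- Two-parameter Mittag-Leffler function `E_{ρ,μ}(z) = ∑_k z^k / Γ(ρ k + μ)`
(restricted to real arguments). -/
noncomputable def mittagLeffler (ρ μ z : ℝ) : ℝ :=
  ∑' k : ℕ, z ^ k / Real.Gamma (ρ * k + μ)

open scoped ENNReal
open Set Filter

/-! ### Riemann–Liouville kernels -/

/-- The Riemann–Liouville kernel `x ↦ x₊^(a-1) / Γ(a)` as an extended nonnegative function on the
whole line. Convolution with it is the fractional integral of order `a`. -/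
noncomputable def rlKernel (a : ℝ) : ℝ → ℝ≥0∞ :=
  (Ioi (0:ℝ)).indicator fun x => ENNReal.ofReal (x ^ (a - 1) / Real.Gamma a)

/-- The positive part of `f` on `(0, T]`, extended by zero to the whole line. -/
noncomputable def posExt (T : ℝ) (f : ℝ → ℝ) : ℝ → ℝ≥0∞ :=
  (Ioc (0:ℝ) T).indicator fun x => ENNReal.ofReal (f x)

@[fun_prop]
lemma measurable_rlKernel (a : ℝ) : Measurable (rlKernel a) := by
  unfold rlKernel
  exact Measurable.indicator (by fun_prop) measurableSet_Ioi

lemma rlKernel_of_pos (a : ℝ) {x : ℝ} (hx : 0 < x) :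
    rlKernel a x = ENNReal.ofReal (x ^ (a - 1) / Real.Gamma a) := by
  simp [rlKernel, hx]

lemma rlKernel_of_nonpos (a : ℝ) {x : ℝ} (hx : x ≤ 0) : rlKernel a x = 0 := by
  simp [rlKernel, hx]

lemma posExt_of_mem {T x : ℝ} (f : ℝ → ℝ) (hx : x ∈ Ioc 0 T) :
    posExt T f x = ENNReal.ofReal (f x) := indicator_of_mem hx _

/-- The semigroup law of fractional integration at the level of kernels. After rescaling to
`(0, 1)` it is the normalization of the Beta distribution. -/
lemma rlKernel_lconvolution {a b : ℝ} (ha : 0 < a) (hb : 0 < b) :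
    rlKernel a ⋆ₗ rlKernel b = rlKernel (a + b) := by
  ext x
  rw [lconvolution_def]
  rcases le_or_gt x 0 with hx | hx
  · rw [rlKernel_of_nonpos _ hx]
    refine (lintegral_congr fun y => ?_).trans lintegral_zero
    rcases le_or_gt y 0 with hy | hy
    · simp [rlKernel_of_nonpos _ hy]
    · rw [rlKernel_of_nonpos b (by linarith), mul_zero]
  have hscale : ∫⁻ y, rlKernel a y * rlKernel b (-y + x) =
      ENNReal.ofReal x * ∫⁻ u, rlKernel a (x * u) * rlKernel b (-(x * u) + x) := by
    have h1 : ∫⁻ u, rlKernel a (x * u) * rlKernel b (-(x * u) + x)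
        = ∫⁻ y, rlKernel a y * rlKernel b (-y + x) ∂(Measure.map (x * ·) volume) := by
      rw [lintegral_map (by fun_prop) (by fun_prop)]
    rw [h1, Real.map_volume_mul_left hx.ne', lintegral_smul_measure, smul_eq_mul, ← mul_assoc,
      ← ENNReal.ofReal_mul hx.le, abs_of_pos (by positivity), mul_inv_cancel₀ hx.ne']
    simp
  have hGa := Real.Gamma_pos_of_pos ha
  have hGb := Real.Gamma_pos_of_pos hb
  have hGab := Real.Gamma_pos_of_pos (add_pos ha hb)
  have hbeta : ∀ u, rlKernel a (x * u) * rlKernel b (-(x * u) + x) =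
      ENNReal.ofReal (x ^ (a + b - 2) / Real.Gamma (a + b)) *
        ProbabilityTheory.betaPDF a b u := by
    intro u
    rw [ProbabilityTheory.betaPDF, ProbabilityTheory.betaPDFReal]
    by_cases hu : 0 < u ∧ u < 1
    · obtain ⟨hu0, hu1⟩ := hu
      have h1 : 0 < x * (1 - u) := mul_pos hx (by linarith)
      rw [if_pos ⟨hu0, hu1⟩, show -(x * u) + x = x * (1 - u) by ring,
        rlKernel_of_pos _ (mul_pos hx hu0), rlKernel_of_pos _ h1,
        ← ENNReal.ofReal_mul (by positivity), ← ENNReal.ofReal_mul (by positivity)]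
      congr 1
      rw [Real.mul_rpow hx.le hu0.le, Real.mul_rpow hx.le (by linarith), ProbabilityTheory.beta,
        show a + b - 2 = (a - 1) + (b - 1) by ring, Real.rpow_add hx]
      field_simp
    · rw [if_neg hu, ENNReal.ofReal_zero, mul_zero]
      rcases le_or_gt u 0 with h | h
      · rw [rlKernel_of_nonpos a (mul_nonpos_of_nonneg_of_nonpos hx.le h), zero_mul]
      · have : 1 ≤ u := by by_contra h'; exact hu ⟨h, by linarith⟩
        rw [rlKernel_of_nonpos b (by nlinarith), mul_zero]
  rw [hscale, lintegral_congr hbeta, lintegral_const_mul' _ _ ENNReal.ofReal_ne_top,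
    ProbabilityTheory.lintegral_betaPDF_eq_one ha hb, mul_one, ← ENNReal.ofReal_mul hx.le,
    rlKernel_of_pos _ hx]
  congr 1
  rw [show a + b - 1 = (a + b - 2) + 1 by ring, Real.rpow_add_one hx.ne']
  ring

/-! ### Convergence of the Mittag-Leffler series -/

lemma rpow_mul_exp_neg_le_Gamma {s R : ℝ} (hs : 1 ≤ s) (hR : 0 < R) :
    R ^ (s - 1) * Real.exp (-R) ≤ Real.Gamma s := by
  have hint := Real.GammaIntegral_convergent (s := s) (by linarith)
  rw [Real.Gamma_eq_integral (by linarith), ← integral_exp_neg_Ioi, ← integral_const_mul]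
  calc ∫ x in Ioi R, R ^ (s - 1) * Real.exp (-x)
      ≤ ∫ x in Ioi R, Real.exp (-x) * x ^ (s - 1) := by
        refine setIntegral_mono_on ((integrableOn_exp_neg_Ioi R).const_mul _)
          (hint.mono_set (Ioi_subset_Ioi hR.le)) measurableSet_Ioi fun x hx => ?_
        rw [mul_comm]
        have hx' : R < x := hx
        gcongr
    _ ≤ ∫ x in Ioi (0:ℝ), Real.exp (-x) * x ^ (s - 1) := by
        refine setIntegral_mono_set hint ?_ (Ioi_subset_Ioi hR.le).eventuallyLE
        filter_upwards [ae_restrict_mem measurableSet_Ioi] with x hx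
        have hx' : 0 < x := hx
        positivity

/-- The Mittag-Leffler series converges: `Γ(s) ≥ R^(s-1) e^(-R)` with `R^ρ = 2 (z + 1)` gives
geometric decay of its terms. -/
lemma summable_mittagLeffler {ρ μ z : ℝ} (hρ : 0 < ρ) (hμ : 0 < μ) (hz : 0 ≤ z) :
    Summable fun k : ℕ => z ^ k / Real.Gamma (ρ * k + μ) := by
  set R : ℝ := (2 * (z + 1)) ^ ρ⁻¹ with hRdef
  have hR : 0 < R := by positivity
  have hRρ : R ^ ρ = 2 * (z + 1) := by
    rw [hRdef, ← Real.rpow_mul (by positivity), inv_mul_cancel₀ hρ.ne', Real.rpow_one]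
  have hgeo : Summable fun k : ℕ => (Real.exp R * R ^ (1 - μ)) * (1 / 2 : ℝ) ^ k :=
    summable_geometric_two.mul_left _
  refine hgeo.of_norm_bounded_eventually_nat ?_
  obtain ⟨N, hN⟩ := exists_nat_ge (1 / ρ)
  filter_upwards [eventually_ge_atTop N] with k hk
  have hk' : 1 ≤ ρ * k := by
    have : 1 / ρ ≤ (k : ℝ) := hN.trans (by exact_mod_cast hk)
    rw [div_le_iff₀ hρ] at this
    linarith
  have hG := rpow_mul_exp_neg_le_Gamma (s := ρ * k + μ) (by linarith) hR
  have hGpos := Real.Gamma_pos_of_pos (s := ρ * k + μ) (by positivity)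
  rw [Real.norm_of_nonneg (by positivity), div_le_iff₀ hGpos]
  have hpow : R ^ (ρ * k + μ - 1) = (2 * (z + 1)) ^ k * R ^ (μ - 1) := by
    rw [← hRρ, add_sub_assoc, Real.rpow_add hR, Real.rpow_mul hR.le, Real.rpow_natCast]
  rw [hpow] at hG
  calc z ^ k ≤ (z + 1) ^ k := by gcongr; linarith
    _ = (Real.exp R * Real.exp (-R)) * (R ^ (1 - μ) * R ^ (μ - 1)) *
        (1 / 2 * (2 * (z + 1))) ^ k := by
        rw [← Real.exp_add, ← Real.rpow_add hR]
        simp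
    _ = (Real.exp R * R ^ (1 - μ)) * (1 / 2) ^ k *
        ((2 * (z + 1)) ^ k * R ^ (μ - 1) * Real.exp (-R)) := by
        rw [mul_pow (1 / 2 : ℝ)]; ring
    _ ≤ _ := by gcongr

/-! ### Fractional integrals as convolutions -/

lemma aemeasurable_posExt {T : ℝ} {f : ℝ → ℝ}
    (hf : AEStronglyMeasurable f (volume.restrict (Ioc 0 T))) : AEMeasurable (posExt T f) := by
  unfold posExt
  rw [aemeasurable_indicator_iff measurableSet_Ioc]
  exact hf.aemeasurable.ennreal_ofReal

/-- For `t ≤ T`, convolution with the kernel is the fractional integral of the positive part. -/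
lemma rlKernel_lconvolution_posExt {a t T : ℝ} (ha : 0 < a) (htT : t ≤ T) (f : ℝ → ℝ) :
    (rlKernel a ⋆ₗ posExt T f) t =
      ∫⁻ y in Ioo 0 t, ENNReal.ofReal ((t - y) ^ (a - 1) / Real.Gamma a * f y) := by
  rw [lconvolution_comm, lconvolution_def, ← lintegral_indicator measurableSet_Ioo]
  refine lintegral_congr fun y => ?_
  have hG := Real.Gamma_pos_of_pos ha
  by_cases hy : y ∈ Ioo 0 t
  · have h1 : 0 < -y + t := by linarith [hy.2]
    have h2 : y ∈ Ioc 0 T := ⟨hy.1, by linarith [hy.2]⟩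
    have h3 : 0 < t - y := by linarith
    rw [indicator_of_mem hy, posExt, indicator_of_mem h2, rlKernel_of_pos _ h1,
      ENNReal.ofReal_mul (by positivity), mul_comm, show -y + t = t - y by ring]
  · rw [indicator_of_notMem hy]
    rcases le_or_gt y 0 with h | h
    · rw [posExt, indicator_of_notMem (fun h' => absurd h'.1 (by linarith)), zero_mul]
    · have : t ≤ y := by by_contra h'; exact hy ⟨h, by linarith⟩
      rw [rlKernel_of_nonpos a (by linarith), mul_zero]

lemma rlKernel_lconvolution_posExt_of_nonpos (a : ℝ) {t T : ℝ} (ht : t ≤ 0) (f : ℝ → ℝ) :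
    (rlKernel a ⋆ₗ posExt T f) t = 0 := by
  rw [lconvolution_def]
  refine (lintegral_congr fun y => ?_).trans lintegral_zero
  rcases le_or_gt y 0 with h | h
  · rw [rlKernel_of_nonpos _ h, zero_mul]
  · rw [posExt, indicator_of_notMem (fun h' => absurd h'.1 (by linarith)), mul_zero]

/-- The real fractional integral as a difference of extended nonnegative ones, whenever these are
finite. -/
lemma rlInt_eq_toReal_sub {a t T : ℝ} (ha : 0 < a) (ht : 0 < t) (htT : t ≤ T) {f : ℝ → ℝ}
    (hf : AEStronglyMeasurable f (volume.restrict (Ioc 0 T)))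
    (hp : (rlKernel a ⋆ₗ posExt T f) t ≠ ∞)
    (hn : (rlKernel a ⋆ₗ posExt T (fun s => -f s)) t ≠ ∞) :
    rlInt a f t = ((rlKernel a ⋆ₗ posExt T f) t).toReal -
      ((rlKernel a ⋆ₗ posExt T (fun s => -f s)) t).toReal := by
  simp only [rlKernel_lconvolution_posExt ha htT, mul_neg] at *
  have hmeas : AEStronglyMeasurable (fun y => (t - y) ^ (a - 1) / Real.Gamma a * f y)
      (volume.restrict (Ioo 0 t)) := by
    have hk : Measurable fun y : ℝ => (t - y) ^ (a - 1) / Real.Gamma a := by fun_prop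
    have hsub : Ioo 0 t ⊆ Ioc 0 T := fun y hy => ⟨hy.1, by linarith [hy.2]⟩
    exact hk.aestronglyMeasurable.mul (hf.mono_measure (Measure.restrict_mono hsub le_rfl))
  have hint : Integrable (fun y => (t - y) ^ (a - 1) / Real.Gamma a * f y)
      (volume.restrict (Ioo 0 t)) := by
    refine ⟨hmeas, ?_⟩
    rw [hasFiniteIntegral_iff_enorm]
    calc ∫⁻ y in Ioo 0 t, ‖(t - y) ^ (a - 1) / Real.Gamma a * f y‖ₑ
        ≤ ∫⁻ y in Ioo 0 t, (ENNReal.ofReal ((t - y) ^ (a - 1) / Real.Gamma a * f y) +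
            ENNReal.ofReal (-((t - y) ^ (a - 1) / Real.Gamma a * f y))) := by
          refine lintegral_mono fun y => ?_
          rw [Real.enorm_eq_ofReal_abs]
          rcases abs_cases ((t - y) ^ (a - 1) / Real.Gamma a * f y) with h | h <;> rw [h.1] <;> simp
      _ = _ := lintegral_add_left' hmeas.aemeasurable.ennreal_ofReal _
      _ < ∞ := ENNReal.add_lt_top.2 ⟨hp.lt_top, hn.lt_top⟩
  rw [← integral_eq_lintegral_pos_part_sub_lintegral_neg_part hint, rlInt,
    intervalIntegral.integral_of_le ht.le, integral_Ioc_eq_integral_Ioo, ← integral_const_mul]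
  congr 1 with y
  ring

lemma lconvolution_rlKernel_one (T : ℝ) (f : ℝ → ℝ) {t : ℝ} (htT : t ≤ T) :
    (rlKernel 1 ⋆ₗ posExt T f) t = ∫⁻ y in Ioo 0 t, ENNReal.ofReal (f y) := by
  rw [rlKernel_lconvolution_posExt one_pos htT]
  simp

/-- Fractional integrals of order less than one of an integrable function are finite almost
everywhere, because integrating to total order one gives the (finite) ordinary integral. -/
lemma ae_lconvolution_ne_top {a T : ℝ} (ha : 0 < a) (ha1 : a < 1) {f : ℝ → ℝ}
    (hf : IntegrableOn f (Ioc 0 T)) :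
    ∀ᵐ t, t ∈ Ioo 0 T → (rlKernel a ⋆ₗ posExt T f) t ≠ ∞ := by
  have hm := aemeasurable_posExt hf.aestronglyMeasurable
  have hone : ((rlKernel a ⋆ₗ posExt T f) ⋆ₗ rlKernel (1 - a)) T ≠ ∞ := by
    rw [lconvolution_comm, lconvolution_assoc₀ (by fun_prop) (by fun_prop) hm,
      rlKernel_lconvolution (by linarith) ha, sub_add_cancel, lconvolution_rlKernel_one _ _ le_rfl]
    have := (hf.mono_set Ioo_subset_Ioc_self).lintegral_lt_top
    exact this.ne
  have hm' : AEMeasurable (rlKernel a ⋆ₗ posExt T f) := by fun_prop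
  rw [lconvolution_def] at hone
  have := ae_lt_top' (by fun_prop) hone
  filter_upwards [this] with t ht htT htop
  have hpos : rlKernel (1 - a) (-t + T) ≠ 0 := by
    have h1 : 0 < -t + T := by linarith [htT.2]
    have := Real.Gamma_pos_of_pos (s := 1 - a) (by linarith)
    rw [rlKernel_of_pos _ h1]
    exact (ENNReal.ofReal_pos.2 (by positivity)).ne'
  rw [htop, ENNReal.top_mul hpos] at ht
  exact lt_irrefl _ ht

/-! ### Iteration of the Volterra inequality -/

lemma lconvolution_const_mul {k g : ℝ → ℝ≥0∞} (hk : AEMeasurable k) (hg : AEMeasurable g)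
    (r : ℝ≥0∞) (t : ℝ) : (k ⋆ₗ fun y => r * g y) t = r * (k ⋆ₗ g) t := by
  rw [lconvolution_def, lconvolution_def, ← lintegral_const_mul'' _ (by fun_prop)]
  exact lintegral_congr fun y => by ring

lemma lconvolution_add_right {k g h : ℝ → ℝ≥0∞} (hk : AEMeasurable k) (hg : AEMeasurable g)
    (t : ℝ) : (k ⋆ₗ fun y => g y + h y) t = (k ⋆ₗ g) t + (k ⋆ₗ h) t := by
  rw [lconvolution_def, lconvolution_def, lconvolution_def, ← lintegral_add_left' (by fun_prop)]
  exact lintegral_congr fun y => by ring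

lemma lconvolution_finset_sum {k : ℝ → ℝ≥0∞} (hk : AEMeasurable k) {g : ℕ → ℝ → ℝ≥0∞}
    (hg : ∀ j, AEMeasurable (g j)) (s : Finset ℕ) (t : ℝ) :
    (k ⋆ₗ fun y => ∑ j ∈ s, g j y) t = ∑ j ∈ s, (k ⋆ₗ g j) t := by
  simp only [lconvolution_def]
  rw [← lintegral_finsetSum' _ (fun j _ => by have := hg j; fun_prop)]
  exact lintegral_congr fun y => by rw [Finset.mul_sum]

lemma lconvolution_mono_right (k : ℝ → ℝ≥0∞) {g h : ℝ → ℝ≥0∞} (hgh : ∀ y, g y ≤ h y) (t : ℝ) :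
    (k ⋆ₗ g) t ≤ (k ⋆ₗ h) t := by
  rw [lconvolution_def, lconvolution_def]
  exact lintegral_mono fun y => mul_le_mul_right (hgh _) _

/-- The `n`-fold iteration of `V ≤ v₀ + J^α C + c J^α V`, with the a priori bound `V ≤ M` inserted
in the remainder. The constants `v₀` and `M` appear as multiples of the order-one kernel, which is
the indicator of `(0, ∞)`. -/
lemma volterra_iterate {α : ℝ} (hα : 0 < α) {V C : ℝ → ℝ≥0∞} {c v₀ M : ℝ≥0∞}
    (hC : AEMeasurable C) (hM : ∀ t, V t ≤ M * rlKernel 1 t)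
    (h : ∀ t, V t ≤ v₀ * rlKernel 1 t + (rlKernel α ⋆ₗ C) t + c * (rlKernel α ⋆ₗ V) t) (n : ℕ) :
    ∀ t, V t ≤ ∑ j ∈ Finset.range n,
        c ^ j * (v₀ * rlKernel (α * j + 1) t + (rlKernel (α * j + α) ⋆ₗ C) t) +
      c ^ n * (M * rlKernel (α * n + 1) t) := by
  induction n with
  | zero => simpa using hM
  | succ n ih =>
    intro t
    have hstep : ∀ (j : ℕ) (s : ℝ),
        (rlKernel α ⋆ₗ fun y => c ^ j *
          (v₀ * rlKernel (α * j + 1) y + (rlKernel (α * j + α) ⋆ₗ C) y)) s =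
        c ^ j * (v₀ * rlKernel (α * (j + 1 : ℕ) + 1) s +
          (rlKernel (α * (j + 1 : ℕ) + α) ⋆ₗ C) s) := by
      intro j s
      have h1 : AEMeasurable (rlKernel (α * j + α) ⋆ₗ C) := by fun_prop
      rw [lconvolution_const_mul (by fun_prop) (by fun_prop),
        lconvolution_add_right (by fun_prop) (by fun_prop),
        lconvolution_const_mul (by fun_prop) (by fun_prop),
        lconvolution_assoc₀ (by fun_prop) (by fun_prop) hC,
        rlKernel_lconvolution hα (by positivity), rlKernel_lconvolution hα (by positivity)]
      push_cast
      rw [show α + (α * j + 1) = α * (j + 1) + 1 by ring,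
        show α + (α * j + α) = α * (j + 1) + α by ring]
    have hrem : (rlKernel α ⋆ₗ fun y => c ^ n * (M * rlKernel (α * n + 1) y)) t =
        c ^ n * (M * rlKernel (α * (n + 1 : ℕ) + 1) t) := by
      rw [lconvolution_const_mul (by fun_prop) (by fun_prop),
        lconvolution_const_mul (by fun_prop) (by fun_prop), rlKernel_lconvolution hα (by positivity)]
      push_cast
      rw [show α + (α * n + 1) = α * (n + 1) + 1 by ring]
    have hg : ∀ j : ℕ, AEMeasurable fun y => c ^ j *
          (v₀ * rlKernel (α * j + 1) y + (rlKernel (α * j + α) ⋆ₗ C) y) := by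
      intro j
      have h1 : AEMeasurable (rlKernel (α * j + α) ⋆ₗ C) := by fun_prop
      fun_prop
    calc V t ≤ v₀ * rlKernel 1 t + (rlKernel α ⋆ₗ C) t + c * (rlKernel α ⋆ₗ V) t := h t
      _ ≤ v₀ * rlKernel 1 t + (rlKernel α ⋆ₗ C) t + c * (∑ j ∈ Finset.range n,
            c ^ j * (v₀ * rlKernel (α * (j + 1 : ℕ) + 1) t +
              (rlKernel (α * (j + 1 : ℕ) + α) ⋆ₗ C) t) +
            c ^ n * (M * rlKernel (α * (n + 1 : ℕ) + 1) t)) := by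
          gcongr
          refine (lconvolution_mono_right _ ih t).trans_eq ?_
          rw [lconvolution_add_right (by fun_prop)
            (Finset.aemeasurable_fun_sum _ fun j _ => hg j),
            lconvolution_finset_sum (by fun_prop) hg, hrem]
          simp only [hstep]
      _ = _ := by
          rw [Finset.sum_range_succ', mul_add, Finset.mul_sum]
          simp only [pow_succ', Nat.cast_zero, mul_zero, zero_add, pow_zero, one_mul, mul_assoc]
          ring

/-- On `(0, t]` the kernel of order `αj + α` is at most a constant times the one of order `α`, so
higher fractional integrals are controlled by the one of order `α`. -/
lemma rlKernel_lconvolution_posExt_le {α t T : ℝ} (hα : 0 < α) (ht : 0 < t) (f : ℝ → ℝ) (j : ℕ) :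
    (rlKernel (α * j + α) ⋆ₗ posExt T f) t ≤
      ENNReal.ofReal ((t ^ α) ^ j * Real.Gamma α / Real.Gamma (α * j + α)) *
        (rlKernel α ⋆ₗ posExt T f) t := by
  have hG := Real.Gamma_pos_of_pos hα
  have hGj := Real.Gamma_pos_of_pos (s := α * j + α) (by positivity)
  rw [lconvolution_def, lconvolution_def, ← lintegral_const_mul' _ _ ENNReal.ofReal_ne_top]
  refine lintegral_mono fun y => ?_
  rcases le_or_gt y 0 with hy | hy
  · simp [rlKernel_of_nonpos _ hy]
  rcases le_or_gt t y with hyt | hyt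
  · rw [posExt, indicator_of_notMem (fun h' => absurd h'.1 (by linarith))]
    simp
  rw [← mul_assoc]
  gcongr
  rw [rlKernel_of_pos _ hy, rlKernel_of_pos _ hy, ← ENNReal.ofReal_mul (by positivity)]
  refine ENNReal.ofReal_le_ofReal ?_
  have hle : y ^ (α * j + α - 1) ≤ (t ^ α) ^ j * y ^ (α - 1) := by
    rw [add_sub_assoc, Real.rpow_add hy, ← Real.rpow_natCast, ← Real.rpow_mul ht.le]
    gcongr
  calc y ^ (α * j + α - 1) / Real.Gamma (α * j + α)
      ≤ (t ^ α) ^ j * y ^ (α - 1) / Real.Gamma (α * j + α) := by gcongr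
    _ = _ := by field_simp

/-! ### From the Caputo derivative to the Volterra inequality -/

lemma rlInt_one (f : ℝ → ℝ) (t : ℝ) : rlInt 1 f t = ∫ s in (0:ℝ)..t, f s := by
  simp [rlInt]

lemma caputo_eq_rlInt (α : ℝ) (v' : ℝ → ℝ) (t : ℝ) : caputo α v' t = rlInt (1 - α) v' t := by
  rw [caputo, rlInt, show 1 - α - 1 = -α by ring]

/-- The differential inequality implies the Volterra inequality `v ≤ v(0) + J^α c₂ + c₁ J^α v`.
The positive and negative parts of `v'` are kept on opposite sides, so that `J^α` applies
monotonically and `J^α J^(1-α) = J^1` turns each side into an ordinary integral. -/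
lemma volterra_of_caputo_le {T α c₁ : ℝ} (hα : 0 < α) (hα1 : α < 1) (hc₁ : 0 < c₁)
    {c₂ v v' : ℝ → ℝ} (hc₂ : AEStronglyMeasurable c₂ (volume.restrict (Ioc 0 T)))
    (hc₂nonneg : ∀ t ∈ Icc (0:ℝ) T, 0 ≤ c₂ t)
    (hvm : AEStronglyMeasurable v (volume.restrict (Ioc 0 T)))
    (hv' : IntegrableOn v' (Ioc 0 T))
    (hAC : ∀ t ∈ Icc (0:ℝ) T, v t = v 0 + ∫ s in (0:ℝ)..t, v' s)
    (hpos : ∀ t ∈ Icc (0:ℝ) T, 0 < v t)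
    (hineq : ∀ᵐ t, t ∈ Ioc (0:ℝ) T → caputo α v' t ≤ c₁ * v t + c₂ t) (t : ℝ) :
    posExt T v t ≤ ENNReal.ofReal (v 0) * rlKernel 1 t + (rlKernel α ⋆ₗ posExt T c₂) t +
      ENNReal.ofReal c₁ * (rlKernel α ⋆ₗ posExt T v) t := by
  by_cases ht : t ∈ Ioc 0 T
  swap
  · rw [posExt, indicator_of_notMem ht]
    exact zero_le
  have h1α : 0 < 1 - α := by linarith
  set P := posExt T v' with hP
  set N := posExt T (fun s => -v' s) with hN
  have hv'n : IntegrableOn (fun s => -v' s) (Ioc 0 T) := hv'.neg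
  have hPm : AEMeasurable P := aemeasurable_posExt hv'.aestronglyMeasurable
  have hNm : AEMeasurable N := aemeasurable_posExt hv'n.aestronglyMeasurable
  have hVm := aemeasurable_posExt hvm
  have hCm := aemeasurable_posExt hc₂
  have hcomp : ∀ f : ℝ → ℝ≥0∞, AEMeasurable f →
      rlKernel α ⋆ₗ (rlKernel (1 - α) ⋆ₗ f) = rlKernel 1 ⋆ₗ f := fun f hf => by
    rw [lconvolution_assoc₀ (by fun_prop) (by fun_prop) hf, rlKernel_lconvolution hα h1α,
      add_sub_cancel]
  have hae : ∀ᵐ y, y ∈ Ioo 0 T → (rlKernel (1 - α) ⋆ₗ P) y ≤ (rlKernel (1 - α) ⋆ₗ N) y +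
      (posExt T c₂ y + ENNReal.ofReal c₁ * posExt T v y) := by
    filter_upwards [hineq, ae_lconvolution_ne_top h1α (by linarith) hv',
      ae_lconvolution_ne_top h1α (by linarith) hv'n] with y hy hyP hyN hyT
    have hyT' : y ∈ Ioc 0 T := Ioo_subset_Ioc_self hyT
    have hyT'' : y ∈ Icc 0 T := Ioo_subset_Icc_self hyT
    specialize hy hyT'
    specialize hyP hyT
    specialize hyN hyT
    rw [caputo_eq_rlInt, rlInt_eq_toReal_sub h1α hyT.1 hyT.2.le hv'.aestronglyMeasurable hyP hyN]
      at hy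
    have hv0 := (hpos y hyT'').le
    have hc0 := hc₂nonneg y hyT''
    rw [posExt_of_mem _ hyT', posExt_of_mem _ hyT', ← ENNReal.ofReal_mul hc₁.le,
      ← ENNReal.ofReal_add hc0 (by positivity), ← ENNReal.ofReal_toReal hyP,
      ← ENNReal.ofReal_toReal hyN, ← ENNReal.ofReal_add ENNReal.toReal_nonneg (by positivity)]
    exact ENNReal.ofReal_le_ofReal (by linarith)
  have hle : (rlKernel 1 ⋆ₗ P) t ≤ (rlKernel 1 ⋆ₗ N) t + ((rlKernel α ⋆ₗ posExt T c₂) t +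
      ENNReal.ofReal c₁ * (rlKernel α ⋆ₗ posExt T v) t) := by
    have hBm : AEMeasurable (rlKernel (1 - α) ⋆ₗ N) := by fun_prop
    rw [← hcomp P hPm, ← hcomp N hNm, ← lconvolution_const_mul (by fun_prop) hVm,
      ← lconvolution_add_right (by fun_prop) hCm, ← lconvolution_add_right (by fun_prop) hBm,
      lconvolution_comm, lconvolution_comm (f := rlKernel α), lconvolution_def, lconvolution_def]
    refine lintegral_mono_ae ?_
    filter_upwards [hae] with y hy
    rcases le_or_gt y 0 with h0 | h0
    · rw [hP, rlKernel_lconvolution_posExt_of_nonpos _ h0, zero_mul]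
      exact zero_le
    rcases le_or_gt t y with hty | hty
    · simp [rlKernel_of_nonpos α (show -y + t ≤ 0 by linarith)]
    · gcongr
      exact hy ⟨h0, hty.trans_le ht.2⟩
  have hfin : ∀ f : ℝ → ℝ, IntegrableOn f (Ioc 0 T) → (rlKernel 1 ⋆ₗ posExt T f) t ≠ ∞ := by
    intro f hf
    rw [lconvolution_rlKernel_one _ _ ht.2]
    have hsub : Ioo 0 t ⊆ Ioc 0 T := fun y hy => ⟨hy.1, by linarith [hy.2, ht.2]⟩
    exact (hf.mono_set hsub).lintegral_lt_top.ne
  have hpf := hfin _ hv'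
  have hnf := hfin _ hv'n
  have hvt := hAC t (Ioc_subset_Icc_self ht)
  rw [← rlInt_one, rlInt_eq_toReal_sub one_pos ht.1 ht.2 hv'.aestronglyMeasurable hpf hnf] at hvt
  have hv0 : 0 < v 0 := hpos 0 ⟨le_rfl, ht.1.le.trans ht.2⟩
  have hvt0 : 0 < v t := hpos t (Ioc_subset_Icc_self ht)
  have hsum : ENNReal.ofReal (v t) + (rlKernel 1 ⋆ₗ N) t =
      ENNReal.ofReal (v 0) + (rlKernel 1 ⋆ₗ P) t := by
    rw [← ENNReal.ofReal_toReal hpf, ← ENNReal.ofReal_toReal hnf,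
      ← ENNReal.ofReal_add hvt0.le ENNReal.toReal_nonneg,
      ← ENNReal.ofReal_add hv0.le ENNReal.toReal_nonneg]
    congr 1
    linarith
  rw [posExt_of_mem _ ht, rlKernel_of_pos _ ht.1]
  simp only [sub_self, Real.rpow_zero, Real.Gamma_one, div_one, ENNReal.ofReal_one, mul_one]
  refine (ENNReal.add_le_add_iff_right hnf).1 ?_
  calc ENNReal.ofReal (v t) + (rlKernel 1 ⋆ₗ N) t
      = ENNReal.ofReal (v 0) + (rlKernel 1 ⋆ₗ P) t := hsum
    _ ≤ _ := by
      refine (add_le_add_right hle _).trans_eq ?_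
      rw [hN]
      ring

/-! ### The Grönwall inequality -/

/-- Fractional Grönwall inequality (Alikhanov): if `v` is positive, absolutely
continuous on `[0,T]` (with a.e. derivative `v'`), and satisfies
`D^α v (t) ≤ c₁ v t + c₂ t` a.e. on `(0,T]` with `c₁ > 0` and `c₂ ≥ 0`
integrable, then for a.e. `t ∈ [0,T]`,
`v t ≤ v 0 * E_α(c₁ t^α) + Γ(α) * E_{α,α}(c₁ t^α) * J^α c₂ (t)`. -/
theorem fractional_gronwall (T α c₁ : ℝ) (hT : 0 < T) (hα : 0 < α) (hα1 : α < 1)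
    (hc₁ : 0 < c₁)
    (c₂ : ℝ → ℝ) (hc₂nonneg : ∀ t ∈ Set.Icc (0:ℝ) T, 0 ≤ c₂ t)
    (hc₂int : IntegrableOn c₂ (Set.Icc 0 T))
    (v v' : ℝ → ℝ) (hv' : IntegrableOn v' (Set.Ioo 0 T))
    (hAC : ∀ t ∈ Set.Icc (0:ℝ) T, v t = v 0 + ∫ s in (0:ℝ)..t, v' s)
    (hpos : ∀ t ∈ Set.Icc (0:ℝ) T, 0 < v t)
    (hineq : ∀ᵐ t ∂(volume.restrict (Set.Ioc (0:ℝ) T)),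
      caputo α v' t ≤ c₁ * v t + c₂ t) :
    ∀ᵐ t ∂(volume.restrict (Set.Icc (0:ℝ) T)),
      v t ≤ v 0 * mittagLeffler α 1 (c₁ * t ^ α)
        + Real.Gamma α * mittagLeffler α α (c₁ * t ^ α) * rlInt α c₂ t := by
  have hc₂i : IntegrableOn c₂ (Ioc 0 T) := hc₂int.mono_set Ioc_subset_Icc_self
  have hv'i : IntegrableOn v' (Ioc 0 T) := (integrableOn_Ioc_iff_integrableOn_Ioo).2 hv'
  have hvc : ContinuousOn v (Icc 0 T) := by
    have h1 : ContinuousOn (fun t => v 0 + ∫ s in (0:ℝ)..t, v' s) (Icc 0 T) := by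
      refine continuousOn_const.add ?_
      have := intervalIntegral.continuousOn_primitive_interval (μ := volume) (f := v') (a := 0)
        (b := T) (by rwa [uIcc_of_le hT.le, integrableOn_Icc_iff_integrableOn_Ioc])
      rwa [uIcc_of_le hT.le] at this
    exact h1.congr hAC
  obtain ⟨M, hM⟩ := isCompact_Icc.exists_bound_of_continuousOn hvc
  have hM0 : 0 ≤ M := (norm_nonneg _).trans (hM 0 ⟨le_rfl, hT.le⟩)
  have hv0 : 0 < v 0 := hpos 0 ⟨le_rfl, hT.le⟩
  have hvm : AEStronglyMeasurable v (volume.restrict (Ioc 0 T)) :=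
    (hvc.mono Ioc_subset_Icc_self).aestronglyMeasurable measurableSet_Ioc
  have hVM : ∀ t, posExt T v t ≤ ENNReal.ofReal M * rlKernel 1 t := by
    intro t
    by_cases ht : t ∈ Ioc 0 T
    · rw [posExt, indicator_of_mem ht, rlKernel_of_pos _ ht.1]
      simp only [sub_self, Real.rpow_zero, Real.Gamma_one, div_one, ENNReal.ofReal_one, mul_one]
      exact ENNReal.ofReal_le_ofReal ((le_abs_self _).trans (hM t (Ioc_subset_Icc_self ht)))
    · rw [posExt, indicator_of_notMem ht]
      exact zero_le
  have hiter := volterra_iterate hα (aemeasurable_posExt hc₂i.aestronglyMeasurable) hVM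
    (volterra_of_caputo_le hα hα1 hc₁ hc₂i.aestronglyMeasurable hc₂nonneg hvm hv'i hAC hpos
      ((ae_restrict_iff' measurableSet_Ioc).1 hineq))
  rw [restrict_Ioo_eq_restrict_Icc.symm, ae_restrict_iff' measurableSet_Ioo]
  filter_upwards [ae_lconvolution_ne_top hα hα1 hc₂i] with t hfin ht
  specialize hfin ht
  have ht0 : 0 < t := ht.1
  have htT : t ∈ Ioc 0 T := Ioo_subset_Ioc_self ht
  have hneg : (rlKernel α ⋆ₗ posExt T (fun s => -c₂ s)) t = 0 := by
    have : posExt T (fun s => -c₂ s) = 0 := by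
      ext y
      refine indicator_apply_eq_zero.2 fun hy => ?_
      simpa using hc₂nonneg y (Ioc_subset_Icc_self hy)
    rw [this]
    simp
  have hJ : rlInt α c₂ t = ((rlKernel α ⋆ₗ posExt T c₂) t).toReal := by
    rw [rlInt_eq_toReal_sub hα ht0 ht.2.le hc₂i.aestronglyMeasurable hfin (by simp [hneg]), hneg]
    simp
  have hJ0 : 0 ≤ rlInt α c₂ t := hJ ▸ ENNReal.toReal_nonneg
  have hJe : (rlKernel α ⋆ₗ posExt T c₂) t = ENNReal.ofReal (rlInt α c₂ t) := by
    rw [hJ, ENNReal.ofReal_toReal hfin]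
  set z := c₁ * t ^ α with hz
  have hz0 : 0 ≤ z := by positivity
  have hG := Real.Gamma_pos_of_pos hα
  have hG1 : ∀ j : ℕ, 0 < Real.Gamma (α * j + 1) := fun j => Real.Gamma_pos_of_pos (by positivity)
  have hGα : ∀ j : ℕ, 0 < Real.Gamma (α * j + α) := fun j => Real.Gamma_pos_of_pos (by positivity)
  have hker : ∀ j : ℕ, rlKernel (α * j + 1) t =
      ENNReal.ofReal ((t ^ α) ^ j / Real.Gamma (α * j + 1)) := by
    intro j
    rw [rlKernel_of_pos _ ht0, add_sub_cancel_right, Real.rpow_mul ht0.le, Real.rpow_natCast]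
  have hn : ∀ n : ℕ, v t ≤ v 0 * ∑ j ∈ Finset.range n, z ^ j / Real.Gamma (α * j + 1) +
      Real.Gamma α * (∑ j ∈ Finset.range n, z ^ j / Real.Gamma (α * j + α)) * rlInt α c₂ t +
      M * (z ^ n / Real.Gamma (α * n + 1)) := by
    intro n
    have hterm : ∀ j : ℕ, ENNReal.ofReal c₁ ^ j * (ENNReal.ofReal (v 0) * rlKernel (α * j + 1) t +
        (rlKernel (α * j + α) ⋆ₗ posExt T c₂) t) ≤
        ENNReal.ofReal (v 0 * (z ^ j / Real.Gamma (α * j + 1)) +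
          Real.Gamma α * (z ^ j / Real.Gamma (α * j + α)) * rlInt α c₂ t) := by
      intro j
      have h1 := hG1 j
      have h2 := hGα j
      calc _ ≤ ENNReal.ofReal c₁ ^ j * (ENNReal.ofReal (v 0) * rlKernel (α * j + 1) t +
            ENNReal.ofReal ((t ^ α) ^ j * Real.Gamma α / Real.Gamma (α * j + α)) *
              (rlKernel α ⋆ₗ posExt T c₂) t) := by
            gcongr
            exact rlKernel_lconvolution_posExt_le hα ht0 c₂ j
        _ = _ := by
            rw [hJe, hker, ← ENNReal.ofReal_pow hc₁.le, ← ENNReal.ofReal_mul hv0.le,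
              ← ENNReal.ofReal_mul (by positivity),
              ← ENNReal.ofReal_add (by positivity) (by positivity),
              ← ENNReal.ofReal_mul (by positivity), hz, mul_pow]
            congr 1
            ring
    have hrem : ENNReal.ofReal c₁ ^ n * (ENNReal.ofReal M * rlKernel (α * n + 1) t) =
        ENNReal.ofReal (M * (z ^ n / Real.Gamma (α * n + 1))) := by
      rw [hker, ← ENNReal.ofReal_pow hc₁.le, ← ENNReal.ofReal_mul hM0,
        ← ENNReal.ofReal_mul (by positivity), hz, mul_pow]
      congr 1
      ring
    have hmain := (hiter n t).trans (add_le_add (Finset.sum_le_sum fun j _ => hterm j) hrem.le)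
    have hnn : ∀ j : ℕ, 0 ≤ v 0 * (z ^ j / Real.Gamma (α * j + 1)) +
          Real.Gamma α * (z ^ j / Real.Gamma (α * j + α)) * rlInt α c₂ t := fun j => by
      have h1 := hG1 j
      have h2 := hGα j
      positivity
    have hrn : 0 ≤ M * (z ^ n / Real.Gamma (α * n + 1)) := by
      have h1 := hG1 n
      positivity
    rw [posExt, indicator_of_mem htT, ← ENNReal.ofReal_sum_of_nonneg fun j _ => hnn j,
      ← ENNReal.ofReal_add (Finset.sum_nonneg fun j _ => hnn j) hrn,
      ENNReal.ofReal_le_ofReal_iff (add_nonneg (Finset.sum_nonneg fun j _ => hnn j) hrn)] at hmain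
    refine hmain.trans_eq ?_
    rw [Finset.sum_add_distrib, ← Finset.mul_sum, ← Finset.sum_mul, ← Finset.mul_sum]
  have hs1 := summable_mittagLeffler hα one_pos hz0
  have hsα := summable_mittagLeffler hα hα hz0
  have hlim := ((hs1.hasSum.tendsto_sum_nat.const_mul (v 0)).add
    ((hsα.hasSum.tendsto_sum_nat.const_mul (Real.Gamma α)).mul_const (rlInt α c₂ t))).add
      (hs1.tendsto_atTop_zero.const_mul M)
  rw [mul_zero, add_zero] at hlim
  exact ge_of_tendsto' hlim hn
end

section
/- Let T > 0, 0 < α < 1, c₁ > 0, and let v : [0,T] → ℝ be absolutely continuous and nonnegative with v(0) = 0 and D^α v(t) ≤ c₁ v(t) for almost every t ∈ (0,T]. Then v(t) = 0 for every t ∈ [0,T]. -/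
/-!
The Riemann–Liouville integral inverts the Caputo derivative: since
`∫_τ^t (t - s)^(α-1) (s - τ)^(-α) ds = Γ(1-α) Γ(α)` for all `τ < t` (`integral_abel_kernel`), Fubini
on the triangle `τ < s < t` gives
`∫_0^t (t - s)^(α-1) ∫_0^s (s - τ)^(-α) v'(τ) dτ ds = Γ(1-α) Γ(α) ∫_0^t v'` (`abel_inversion`).
Integrating the hypothesis `D^α v ≤ c₁ v` against the nonnegative weight `(t - s)^(α-1)` therefore
yields `v(t) ≤ (c₁ / Γ(α)) ∫_0^t (t - s)^(α-1) v(s) ds`.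

A continuous nonnegative `v` satisfying such an inequality vanishes (`weakly_singular_gronwall`):
let `M` be the maximum of `exp(-r t) v(t)`; since `∫_0^∞ u^(α-1) exp(-r u) du = Γ(α) r^(-α)`,
a large `r` makes the right-hand side at most `M exp(r t) / 2`, whence `M ≤ M / 2`.
-/

open MeasureTheory Real

open Set

/-- Beta integral with exponents adding up to `-1`; its value is independent of the interval. -/
lemma integral_abel_kernel {α : ℝ} (hα : 0 < α) (hα1 : α < 1) {τ t : ℝ} (h : τ < t) :
    ∫ s in τ..t, (t - s) ^ (α - 1) * (s - τ) ^ (-α) = Gamma (1 - α) * Gamma α := by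
  have hpos : 0 < t - τ := sub_pos.2 h
  have key := Complex.betaIntegral_scaled ((1 - α : ℝ) : ℂ) (α : ℂ) hpos
  have hB := Complex.Gamma_mul_Gamma_eq_betaIntegral (s := ((1 - α : ℝ) : ℂ)) (t := (α : ℂ))
    (by simpa using hα1) (by simpa using hα)
  have e : (((1 - α : ℝ) : ℂ) + α) = 1 := by push_cast; ring
  rw [e, Complex.Gamma_one, one_mul] at hB
  rw [e, sub_self, Complex.cpow_zero, one_mul, ← hB, Complex.Gamma_ofReal, Complex.Gamma_ofReal,
    ← Complex.ofReal_mul] at key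
  have shift := intervalIntegral.integral_comp_add_right (a := 0) (b := t - τ)
    (fun s => (t - s) ^ (α - 1) * (s - τ) ^ (-α)) τ
  rw [zero_add, sub_add_cancel] at shift
  rw [← shift, ← Complex.ofReal_inj, ← key, ← intervalIntegral.integral_ofReal]
  refine intervalIntegral.integral_congr fun x hx => ?_
  rw [uIcc_of_le hpos.le] at hx
  have h1 : t - (x + τ) = t - τ - x := by ring
  simp only [add_sub_cancel_right, h1]
  rw [mul_comm, Complex.ofReal_mul, Complex.ofReal_cpow hx.1,
    Complex.ofReal_cpow (sub_nonneg.2 hx.2)]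
  push_cast
  congr 2
  ring

/-- Integrability of the Abel-type integrand together with its Riemann–Liouville integral. -/
lemma abel_inversion {α : ℝ} (hα : 0 < α) (hα1 : α < 1) {t : ℝ} {f : ℝ → ℝ}
    (hf : IntegrableOn f (Ioc 0 t)) :
    IntegrableOn (fun s => (t - s) ^ (α - 1) * ∫ τ in (0:ℝ)..s, (s - τ) ^ (-α) * f τ) (Ioc 0 t) ∧
    ∫ s in Ioc 0 t, (t - s) ^ (α - 1) * ∫ τ in (0:ℝ)..s, (s - τ) ^ (-α) * f τ =
      Gamma (1 - α) * Gamma α * ∫ τ in Ioc 0 t, f τ := by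
  have hBpos : 0 < Gamma (1 - α) * Gamma α :=
    mul_pos (Gamma_pos_of_pos (by linarith)) (Gamma_pos_of_pos hα)
  set B := Gamma (1 - α) * Gamma α with hB
  -- the kernel, extended by zero off the triangle `τ < s`
  let k : ℝ × ℝ → ℝ := {p : ℝ × ℝ | p.2 < p.1}.indicator
    fun p => (t - p.1) ^ (α - 1) * (p.1 - p.2) ^ (-α)
  have hk : Measurable k := by
    refine Measurable.indicator ?_ (measurableSet_lt measurable_snd measurable_fst)
    fun_prop
  have hksec : ∀ τ, (fun s => k (s, τ)) =
      (Ioi τ).indicator fun s => (t - s) ^ (α - 1) * (s - τ) ^ (-α) := by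
    intro τ; ext s; simp [k, indicator]
  have hk0 : ∀ s ∈ Ioc 0 t, ∀ τ, 0 ≤ k (s, τ) := by
    intro s hs τ
    refine indicator_apply_nonneg fun hp => ?_
    have hp' : τ < s := hp
    exact mul_nonneg (rpow_nonneg (sub_nonneg.2 hs.2) _) (rpow_nonneg (sub_pos.2 hp').le _)
  have hkI : ∀ τ ∈ Ioo 0 t, ∫ s in Ioc 0 t, k (s, τ) = B := by
    intro τ hτ
    rw [hksec, setIntegral_indicator measurableSet_Ioi, Ioc_inter_Ioi, sup_eq_right.2 hτ.1.le,
      ← intervalIntegral.integral_of_le hτ.2.le, integral_abel_kernel hα hα1 hτ.2]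
  have hkInt : ∀ τ ∈ Ioo 0 t, IntegrableOn (fun s => k (s, τ)) (Ioc 0 t) := fun τ hτ =>
    Integrable.of_integral_ne_zero (by rw [hkI τ hτ]; exact hBpos.ne')
  have hae : ∀ᵐ τ ∂(volume.restrict (Ioc 0 t)), τ ∈ Ioo 0 t := by
    rw [← restrict_Ioo_eq_restrict_Ioc]
    exact ae_restrict_mem measurableSet_Ioo
  let F : ℝ → ℝ → ℝ := fun s τ => k (s, τ) * f τ
  have hF : Integrable (Function.uncurry F)
      ((volume.restrict (Ioc 0 t)).prod (volume.restrict (Ioc 0 t))) := by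
    have hm : AEStronglyMeasurable (Function.uncurry F)
        ((volume.restrict (Ioc 0 t)).prod (volume.restrict (Ioc 0 t))) :=
      hk.aestronglyMeasurable.mul hf.aestronglyMeasurable.comp_snd
    rw [integrable_prod_iff' hm]
    constructor
    · filter_upwards [hae] with τ hτ
      exact (hkInt τ hτ).mul_const (f τ)
    · refine (hf.norm.const_mul B).congr ?_
      filter_upwards [hae] with τ hτ
      rw [← hkI τ hτ, ← integral_mul_const]
      refine setIntegral_congr_fun measurableSet_Ioc fun s hs => ?_
      simp [F, abs_of_nonneg (hk0 s hs τ)]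
  have hinner : ∀ s ∈ Ioc 0 t, ∫ τ in Ioc 0 t, F s τ =
      (t - s) ^ (α - 1) * ∫ τ in (0:ℝ)..s, (s - τ) ^ (-α) * f τ := by
    intro s hs
    have : F s = (Iio s).indicator
        fun τ => (t - s) ^ (α - 1) * ((s - τ) ^ (-α) * f τ) := by
      ext τ
      by_cases h : τ < s <;> simp [F, k, indicator, h, mul_assoc]
    rw [this, setIntegral_indicator measurableSet_Iio,
      intervalIntegral.integral_of_le hs.1.le, integral_Ioc_eq_integral_Ioo, integral_const_mul]
    congr 3
    ext x
    simp only [mem_inter_iff, mem_Ioc, mem_Iio, mem_Ioo]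
    exact ⟨fun h => ⟨h.1.1, h.2⟩, fun h => ⟨⟨h.1, h.2.le.trans hs.2⟩, h.2⟩⟩
  refine ⟨IntegrableOn.congr_fun hF.integral_prod_left hinner measurableSet_Ioc, ?_⟩
  rw [← setIntegral_congr_fun measurableSet_Ioc hinner, integral_integral_swap hF,
    ← integral_const_mul]
  refine integral_congr_ae ?_
  filter_upwards [hae] with τ hτ
  simp only [F]
  rw [integral_mul_const, hkI τ hτ]

lemma integrableOn_rpow_sub_mul {α t : ℝ} (hα : 0 < α) (ht : 0 ≤ t) {g : ℝ → ℝ}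
    (hg : ContinuousOn g (Icc 0 t)) :
    IntegrableOn (fun s => (t - s) ^ (α - 1) * g s) (Ioc 0 t) := by
  have h1 : IntervalIntegrable (fun s : ℝ => s ^ (α - 1)) volume 0 t :=
    intervalIntegral.intervalIntegrable_rpow' (by linarith)
  have h2 := (h1.comp_sub_left t).symm
  rw [sub_self, sub_zero] at h2
  have h3 := h2.mul_continuousOn (g := g) (by rwa [uIcc_of_le ht])
  rwa [intervalIntegrable_iff_integrableOn_Ioc_of_le ht] at h3

/-- Grönwall's lemma for the weakly singular kernel `(t - s) ^ (α - 1)`. -/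
lemma weakly_singular_gronwall {α T C : ℝ} (hα : 0 < α) (hT : 0 ≤ T) (hC : 0 < C) {v : ℝ → ℝ}
    (hv : ContinuousOn v (Icc 0 T)) (hnonneg : ∀ t ∈ Icc 0 T, 0 ≤ v t)
    (h : ∀ t ∈ Icc 0 T, v t ≤ C * ∫ s in Ioc 0 t, (t - s) ^ (α - 1) * v s) :
    ∀ t ∈ Icc 0 T, v t = 0 := by
  have hG : 0 < Gamma α := Gamma_pos_of_pos hα
  -- `r` is chosen so that `C * Γ(α) * r ^ (-α) = 1 / 2`
  obtain ⟨r, hr, hrC⟩ : ∃ r : ℝ, 0 < r ∧ C * ((1 / r) ^ α * Gamma α) = 1 / 2 := by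
    refine ⟨(2 * C * Gamma α) ^ (1 / α), by positivity, ?_⟩
    rw [div_rpow zero_le_one (by positivity), one_rpow, ← rpow_mul (by positivity),
      one_div_mul_cancel hα.ne', rpow_one]
    field_simp
  obtain ⟨t₀, ht₀, hmax⟩ := isCompact_Icc.exists_isMaxOn (nonempty_Icc.2 hT)
    (f := fun t => exp (-(r * t)) * v t) (by fun_prop)
  set M := exp (-(r * t₀)) * v t₀ with hM
  have hM0 : 0 ≤ M := mul_nonneg (exp_pos _).le (hnonneg _ ht₀)
  have hexp : ∀ x : ℝ, exp (r * x) * exp (-(r * x)) = 1 := fun x => by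
    rw [← exp_add, add_neg_cancel, exp_zero]
  have hvle : ∀ s ∈ Icc 0 T, v s ≤ M * exp (r * s) := by
    intro s hs
    have h1 : exp (-(r * s)) * v s ≤ M := hmax hs
    calc v s = exp (-(r * s)) * v s * exp (r * s) := by linear_combination (-v s) * hexp s
      _ ≤ _ := mul_le_mul_of_nonneg_right h1 (exp_pos _).le
  have hlap := integral_rpow_mul_exp_neg_mul_Ioi hα hr
  have hlapInt : IntegrableOn (fun u : ℝ => u ^ (α - 1) * exp (-(r * u))) (Ioi 0) :=
    Integrable.of_integral_ne_zero (by rw [hlap]; positivity)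
  have hsub : ∫ s in Ioc 0 t₀, (t₀ - s) ^ (α - 1) * exp (-(r * (t₀ - s))) ≤
      (1 / r) ^ α * Gamma α := by
    rw [← hlap, ← intervalIntegral.integral_of_le ht₀.1,
      intervalIntegral.integral_comp_sub_left (fun u : ℝ => u ^ (α - 1) * exp (-(r * u))) t₀,
      sub_self, sub_zero, intervalIntegral.integral_of_le ht₀.1]
    refine setIntegral_mono_set hlapInt ?_ Ioc_subset_Ioi_self.eventuallyLE
    filter_upwards [ae_restrict_mem measurableSet_Ioi] with u hu
    exact mul_nonneg (rpow_nonneg (le_of_lt hu) _) (exp_pos _).le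
  have hint : ∫ s in Ioc 0 t₀, (t₀ - s) ^ (α - 1) * v s ≤
      M * exp (r * t₀) * ∫ s in Ioc 0 t₀, (t₀ - s) ^ (α - 1) * exp (-(r * (t₀ - s))) := by
    rw [← integral_const_mul]
    refine setIntegral_mono_on
      (integrableOn_rpow_sub_mul hα ht₀.1 (hv.mono (Icc_subset_Icc_right ht₀.2)))
      ((integrableOn_rpow_sub_mul hα ht₀.1 (by fun_prop)).const_mul _) measurableSet_Ioc
      fun s hs => ?_
    have h1 := mul_le_mul_of_nonneg_left (hvle s ⟨hs.1.le, hs.2.trans ht₀.2⟩)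
      (rpow_nonneg (sub_nonneg.2 hs.2) (α - 1))
    have h2 : exp (r * s) = exp (r * t₀) * exp (-(r * (t₀ - s))) := by
      rw [← exp_add]; congr 1; ring
    rw [h2] at h1
    linarith
  have hle : v t₀ ≤ M * exp (r * t₀) * (1 / 2) := by
    rw [← hrC]
    have h1 := mul_le_mul_of_nonneg_left hsub (mul_nonneg hM0 (exp_pos (r * t₀)).le)
    have h2 := mul_le_mul_of_nonneg_left (hint.trans h1) hC.le
    linarith [h t₀ ht₀]
  have hMle : M ≤ 0 := by
    have h1 := mul_le_mul_of_nonneg_left hle (exp_pos (-(r * t₀))).le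
    have h2 : exp (-(r * t₀)) * (M * exp (r * t₀) * (1 / 2)) = M / 2 := by
      linear_combination (M / 2) * hexp t₀
    rw [h2, ← hM] at h1
    linarith
  intro t ht
  refine le_antisymm ((hvle t ht).trans ?_) (hnonneg t ht)
  exact mul_nonpos_of_nonpos_of_nonneg hMle (exp_pos _).le

/-- Fractional Grönwall uniqueness lemma: if `v` is nonnegative, absolutely
continuous on `[0,T]` (with a.e. derivative `v'`), `v 0 = 0` and
`D^α v (t) ≤ c₁ v t` a.e. on `(0,T]` with `c₁ > 0`, then `v ≡ 0` on `[0,T]`. -/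
theorem eq_zero_of_caputo_le (T α c₁ : ℝ) (hT : 0 < T) (hα : 0 < α) (hα1 : α < 1)
    (hc₁ : 0 < c₁)
    (v v' : ℝ → ℝ) (hv' : IntegrableOn v' (Set.Ioo 0 T))
    (hAC : ∀ t ∈ Set.Icc (0:ℝ) T, v t = v 0 + ∫ s in (0:ℝ)..t, v' s)
    (hnonneg : ∀ t ∈ Set.Icc (0:ℝ) T, 0 ≤ v t)
    (hv0 : v 0 = 0)
    (hineq : ∀ᵐ t ∂(volume.restrict (Set.Ioc (0:ℝ) T)), caputo α v' t ≤ c₁ * v t) :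
    ∀ t ∈ Set.Icc (0:ℝ) T, v t = 0 := by
  have hG : 0 < Gamma α := Gamma_pos_of_pos hα
  have hG1 : 0 < Gamma (1 - α) := Gamma_pos_of_pos (by linarith)
  have hvIcc : IntegrableOn v' (Icc 0 T) := (integrableOn_Icc_iff_integrableOn_Ioo).2 hv'
  have hcont : ContinuousOn v (Icc 0 T) := by
    have h1 := intervalIntegral.continuousOn_primitive_interval (f := v') (μ := volume)
      (a := 0) (b := T) (by rwa [uIcc_of_le hT.le])
    rw [uIcc_of_le hT.le] at h1
    refine h1.congr fun t ht => ?_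
    rw [hAC t ht, hv0, zero_add]
  refine weakly_singular_gronwall hα hT.le (div_pos hc₁ hG) hcont hnonneg fun t ht => ?_
  obtain ⟨hI, hE⟩ := abel_inversion hα hα1 (t := t)
    (hvIcc.mono_set (Ioc_subset_Icc_self.trans (Icc_subset_Icc_right ht.2)))
  rw [← intervalIntegral.integral_of_le (f := v') ht.1] at hE
  have hvt := hAC t ht
  rw [hv0, zero_add] at hvt
  rw [← hvt] at hE
  have hmono : ∫ s in Ioc 0 t, (t - s) ^ (α - 1) * ∫ τ in (0:ℝ)..s, (s - τ) ^ (-α) * v' τ ≤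
      ∫ s in Ioc 0 t, Gamma (1 - α) * c₁ * ((t - s) ^ (α - 1) * v s) := by
    refine integral_mono_ae hI ((integrableOn_rpow_sub_mul hα ht.1
      (hcont.mono (Icc_subset_Icc_right ht.2))).const_mul _) ?_
    filter_upwards [ae_restrict_of_ae_restrict_of_subset (Ioc_subset_Ioc_right ht.2) hineq,
      ae_restrict_mem measurableSet_Ioc] with s hs hmem
    rw [caputo, one_div, inv_mul_le_iff₀ hG1] at hs
    have := mul_le_mul_of_nonneg_left hs (rpow_nonneg (sub_nonneg.2 hmem.2) (α - 1))
    linarith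
  rw [hE, integral_const_mul, mul_assoc, mul_assoc, mul_le_mul_iff_right₀ hG1] at hmono
  rw [div_mul_eq_mul_div, le_div_iff₀ hG]
  linarith
end

section
/- Under the setup below, fix t ∈ [0,T] and let u(t,·,·) : closure(G) × [0,π] → ℝ be continuously differentiable in y with u(t,·,·), u_y(t,·,·) ∈ L²(D). Then the function f·h, where h is defined from u by the quotient formula in the setup, satisfies ∫_D |f(t,x,y) h(t,x)|² dx dy ≤ 3 f_M² ( ‖a(t,·)‖²_{L²(G)} + 2 ‖ω‖² ( ‖g(t,·,·,0)‖²_{L²(D)} + ℓ₀² ‖u(t,·,·)‖²_{L²(D)} ) + ‖ω′‖² ‖u_y(t,·,·)‖²_{L²(D)} ). -/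
/-!
For each fixed `x`, the bound on `f` gives `(f h)² ≤ (f_M² / π) N²` with `N` the numerator of `h`,
so integrating over `y ∈ (0,π)` leaves `f_M² N²`. The elementary inequality
`(a - b + c)² ≤ 3 (a² + b² + c²)` and the Cauchy–Schwarz inequality `l2ip_sq_le`, together with the
linear growth `|g(u)| ≤ |g(0)| + ℓ₀ |u|`, bound `N²` by a function of `x` that is integrable
on `G` (compactness for `a` and `g(·,0)`, Fubini for `u` and `u_y`); integrating in `x` concludes.
Measurability of `h` is never needed: both integrals on the left are of nonnegative functions
dominated by integrable ones.
-/

open MeasureTheory Real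

/-- The `L²(0,π)` inner product `(p,q) = ∫_0^π p q dy`. -/
noncomputable def l2ip (p q : ℝ → ℝ) : ℝ := ∫ y in Set.Ioo (0:ℝ) π, p y * q y

/-- The squared `L²(0,π)` norm `‖p‖² = ∫_0^π p² dy`. -/
noncomputable def l2sq (p : ℝ → ℝ) : ℝ := ∫ y in Set.Ioo (0:ℝ) π, (p y) ^ 2

lemma integrableOn_Ioo_of_continuousOn {p : ℝ → ℝ} (hp : ContinuousOn p (Set.Icc 0 π)) :
    IntegrableOn p (Set.Ioo 0 π) :=
  (hp.integrableOn_compact isCompact_Icc).mono_set Set.Ioo_subset_Icc_self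

lemma l2sq_nonneg (p : ℝ → ℝ) : 0 ≤ l2sq p :=
  integral_nonneg fun _ => sq_nonneg _

/-- Cauchy–Schwarz in `L²(0,π)`, by the discriminant of `s ↦ ‖s p + q‖²`. -/
lemma l2ip_sq_le {p q : ℝ → ℝ} (hp : ContinuousOn p (Set.Icc 0 π))
    (hq : ContinuousOn q (Set.Icc 0 π)) : (l2ip p q) ^ 2 ≤ l2sq p * l2sq q := by
  have key : ∀ s : ℝ, 0 ≤ l2sq p * (s * s) + (2 * l2ip p q) * s + l2sq q := by
    intro s
    have h0 : 0 ≤ l2sq fun y => s * p y + q y := l2sq_nonneg _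
    have e : (l2sq fun y => s * p y + q y)
        = l2sq p * (s * s) + (2 * l2ip p q) * s + l2sq q := by
      have i1 : IntegrableOn (fun y => (s * s) * (p y) ^ 2) (Set.Ioo 0 π) :=
        integrableOn_Ioo_of_continuousOn (by fun_prop)
      have i2 : IntegrableOn (fun y => (2 * s) * (p y * q y)) (Set.Ioo 0 π) :=
        integrableOn_Ioo_of_continuousOn (by fun_prop)
      have i3 : IntegrableOn (fun y => (q y) ^ 2) (Set.Ioo 0 π) :=
        integrableOn_Ioo_of_continuousOn (by fun_prop)
      have e1 : (fun y => (s * p y + q y) ^ 2)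
          = fun y => ((s * s) * (p y) ^ 2 + (2 * s) * (p y * q y)) + (q y) ^ 2 := by
        funext y; ring
      have i12 : IntegrableOn (fun y => (s * s) * (p y) ^ 2 + (2 * s) * (p y * q y))
          (Set.Ioo 0 π) := i1.add i2
      simp only [l2sq, l2ip]
      rw [e1, integral_add i12 i3, integral_add i1 i2, integral_const_mul, integral_const_mul]
      ring
    rwa [e] at h0
  have := discrim_le_zero key
  unfold discrim at this
  linarith

/-- The partial integral over `y` of a function integrable on `G × (0,π)` is integrable on `G`. -/
lemma integrableOn_inner {n : ℕ} {G : Set (Fin n → ℝ)} {F : (Fin n → ℝ) × ℝ → ℝ}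
    (hF : IntegrableOn F (G ×ˢ Set.Ioo 0 π)) :
    IntegrableOn (fun x => ∫ y in Set.Ioo (0:ℝ) π, F (x, y)) G := by
  rw [IntegrableOn, Measure.volume_eq_prod, ← Measure.prod_restrict] at hF
  exact hF.integral_prod_left

/-- If `|v| ≤ |v₀| + ℓ |w|` on `[0,π]`, then `(v,q)² ≤ 2 ‖q‖² (‖v₀‖² + ℓ² ‖w‖²)`. -/
lemma l2ip_sq_le_of_growth {v v₀ w q : ℝ → ℝ} {ℓ : ℝ} (hv₀ : ContinuousOn v₀ (Set.Icc 0 π))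
    (hw : ContinuousOn w (Set.Icc 0 π)) (hq : ContinuousOn q (Set.Icc 0 π))
    (hv : ∀ y ∈ Set.Icc (0:ℝ) π, |v y| ≤ |v₀ y| + ℓ * |w y|) :
    (l2ip v q) ^ 2 ≤ 2 * l2sq q * (l2sq v₀ + ℓ ^ 2 * l2sq w) := by
  have hb : ContinuousOn (fun y => |v₀ y| + ℓ * |w y|) (Set.Icc 0 π) := by fun_prop
  have hq' : ContinuousOn (fun y => |q y|) (Set.Icc 0 π) := by fun_prop
  have h1 : |l2ip v q| ≤ l2ip (fun y => |v₀ y| + ℓ * |w y|) (fun y => |q y|) := by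
    rw [← Real.norm_eq_abs]
    unfold l2ip
    refine norm_integral_le_of_norm_le (integrableOn_Ioo_of_continuousOn (hb.mul hq')) ?_
    refine (ae_restrict_iff' measurableSet_Ioo).2 (.of_forall fun y hy => ?_)
    rw [Real.norm_eq_abs, abs_mul]
    exact mul_le_mul_of_nonneg_right (hv y (Set.Ioo_subset_Icc_self hy)) (abs_nonneg _)
  have h2 := l2ip_sq_le hb hq'
  have h3 : (l2sq fun y => |q y|) = l2sq q := by simp [l2sq, sq_abs]
  have h4 : (l2sq fun y => |v₀ y| + ℓ * |w y|) ≤ 2 * (l2sq v₀ + ℓ ^ 2 * l2sq w) := by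
    have i1 : IntegrableOn (fun y => (v₀ y) ^ 2) (Set.Ioo 0 π) :=
      integrableOn_Ioo_of_continuousOn (by fun_prop)
    have i2 : IntegrableOn (fun y => ℓ ^ 2 * (w y) ^ 2) (Set.Ioo 0 π) :=
      integrableOn_Ioo_of_continuousOn (by fun_prop)
    simp only [l2sq]
    rw [← integral_const_mul (ℓ ^ 2), ← integral_add i1 i2, ← integral_const_mul]
    refine integral_mono_of_nonneg (.of_forall fun y => sq_nonneg _) ((i1.add i2).const_mul 2)
      (.of_forall fun y => ?_)
    dsimp only
    nlinarith [sq_nonneg (|v₀ y| - ℓ * |w y|), sq_abs (v₀ y), sq_abs (w y)]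
  rw [h3] at h2
  calc (l2ip v q) ^ 2 = |l2ip v q| ^ 2 := (sq_abs _).symm
    _ ≤ (l2ip (fun y => |v₀ y| + ℓ * |w y|) (fun y => |q y|)) ^ 2 := by gcongr
    _ ≤ _ := h2
    _ ≤ (2 * (l2sq v₀ + ℓ ^ 2 * l2sq w)) * l2sq q :=
        mul_le_mul_of_nonneg_right h4 (l2sq_nonneg q)
    _ = _ := by ring

/-- The part of the estimate in the variable `y`: the constant `1/√π` in the bound on `p` absorbs
the length of `(0,π)`. -/
lemma integral_mul_div_sq_le {p : ℝ → ℝ} {M d N : ℝ} (hd : d ≠ 0)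
    (hp : ∀ y ∈ Set.Icc (0:ℝ) π, |p y| ≤ (M / Real.sqrt π) * |d|) :
    ∫ y in Set.Ioo (0:ℝ) π, (p y * (N / d)) ^ 2 ≤ M ^ 2 * N ^ 2 := by
  have hpt : ∀ y ∈ Set.Icc (0:ℝ) π, (p y * (N / d)) ^ 2 ≤ M ^ 2 * N ^ 2 / π := by
    intro y hy
    have h1 : (p y) ^ 2 ≤ ((M / Real.sqrt π) * |d|) ^ 2 := by
      rw [← sq_abs (p y)]
      exact pow_le_pow_left₀ (abs_nonneg _) (hp y hy) 2
    rw [mul_pow, div_pow, Real.sq_sqrt pi_pos.le, sq_abs] at h1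
    calc (p y * (N / d)) ^ 2 = (p y) ^ 2 * (N / d) ^ 2 := mul_pow _ _ _
      _ ≤ (M ^ 2 / π * d ^ 2) * (N / d) ^ 2 := mul_le_mul_of_nonneg_right h1 (sq_nonneg _)
      _ = M ^ 2 * N ^ 2 / π := by field_simp
  calc ∫ y in Set.Ioo (0:ℝ) π, (p y * (N / d)) ^ 2
      ≤ ∫ _y in Set.Ioo (0:ℝ) π, M ^ 2 * N ^ 2 / π := by
        refine integral_mono_of_nonneg (.of_forall fun y => sq_nonneg _)
          (integrableOn_Ioo_of_continuousOn continuousOn_const) ?_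
        exact (ae_restrict_iff' measurableSet_Ioo).2
          (.of_forall fun y hy => hpt y (Set.Ioo_subset_Icc_self hy))
    _ = M ^ 2 * N ^ 2 := by
        have := pi_pos.ne'
        simp [Measure.real, pi_pos.le]
        field_simp

/-- A priori bound on the source term `f·h`, where
`h(t,x) = [a(t,x) - (g(t,x,·,u(t,x,·)),ω) + (u_y(t,x,·),ω')] / (f(t,x,·),ω)`:
`‖f h‖²_{L²(D)} ≤ 3 f_M² (‖a‖²_{L²(G)} + 2‖ω‖²(‖g(·,0)‖² + ℓ₀²‖u‖²) + ‖ω'‖²‖u_y‖²)`. -/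
theorem fh_L2_bound
    (T : ℝ) (hT : 0 < T) (n : ℕ) (hn : 1 ≤ n)
    (G : Set (Fin n → ℝ)) (hGopen : IsOpen G) (hGbdd : Bornology.IsBounded G)
    -- ω ∈ C¹([0,π]) with ω(0) = ω(π) = 0 and ‖ω'‖ > 0
    (ω ω' : ℝ → ℝ)
    (hω_diff : ∀ y ∈ Set.Icc (0:ℝ) π, HasDerivAt ω (ω' y) y)
    (hω'_cont : ContinuousOn ω' (Set.Icc 0 π))
    (hω0 : ω 0 = 0) (hωπ : ω π = 0)
    (hω'_pos : 0 < l2sq ω')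
    (f_M ℓ₀ : ℝ) (hfM : 0 < f_M) (hℓ₀ : 0 < ℓ₀)
    -- f continuous, (f(t,x,·),ω) ≠ 0, |f| ≤ (f_M/√π)|(f(t,x,·),ω)|
    (f : ℝ → (Fin n → ℝ) → ℝ → ℝ)
    (hf_cont : ContinuousOn (fun p : ℝ × (Fin n → ℝ) × ℝ => f p.1 p.2.1 p.2.2)
      (Set.Icc 0 T ×ˢ closure G ×ˢ Set.Icc 0 π))
    (hf_ne : ∀ t ∈ Set.Icc (0:ℝ) T, ∀ x ∈ closure G, l2ip (f t x) ω ≠ 0)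
    (hf_bd : ∀ t ∈ Set.Icc (0:ℝ) T, ∀ x ∈ closure G, ∀ y ∈ Set.Icc (0:ℝ) π,
      |f t x y| ≤ (f_M / Real.sqrt π) * |l2ip (f t x) ω|)
    -- g continuous and ℓ₀-Lipschitz in the last variable
    (g : ℝ → (Fin n → ℝ) → ℝ → ℝ → ℝ)
    (hg_cont : ∀ u : ℝ, ContinuousOn (fun p : ℝ × (Fin n → ℝ) × ℝ => g p.1 p.2.1 p.2.2 u)
      (Set.Icc 0 T ×ˢ closure G ×ˢ Set.Icc 0 π))
    (hg_lip : ∀ t ∈ Set.Icc (0:ℝ) T, ∀ x ∈ closure G, ∀ y ∈ Set.Icc (0:ℝ) π,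
      ∀ u v : ℝ, |g t x y u - g t x y v| ≤ ℓ₀ * |u - v|)
    -- a continuous
    (a : ℝ → (Fin n → ℝ) → ℝ)
    (ha_cont : ContinuousOn (fun p : ℝ × (Fin n → ℝ) => a p.1 p.2)
      (Set.Icc 0 T ×ˢ closure G))
    -- fixed time t, u(t,·,·) continuously differentiable in y, u, u_y ∈ L²(D)
    (t : ℝ) (ht : t ∈ Set.Icc (0:ℝ) T)
    (u uy : (Fin n → ℝ) → ℝ → ℝ)
    (hu_diff : ∀ x ∈ closure G, ∀ y ∈ Set.Icc (0:ℝ) π, HasDerivAt (u x) (uy x y) y)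
    (huy_cont : ∀ x ∈ closure G, ContinuousOn (uy x) (Set.Icc 0 π))
    (hu_L2 : IntegrableOn (fun p : (Fin n → ℝ) × ℝ => (u p.1 p.2) ^ 2)
      (G ×ˢ Set.Ioo 0 π))
    (huy_L2 : IntegrableOn (fun p : (Fin n → ℝ) × ℝ => (uy p.1 p.2) ^ 2)
      (G ×ˢ Set.Ioo 0 π)) :
    (∫ x in G, ∫ y in Set.Ioo (0:ℝ) π,
        (f t x y *
          ((a t x - l2ip (fun y => g t x y (u x y)) ω + l2ip (uy x) ω')
            / l2ip (f t x) ω)) ^ 2)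
      ≤ 3 * f_M ^ 2 *
        ((∫ x in G, (a t x) ^ 2)
          + 2 * l2sq ω *
            ((∫ x in G, ∫ y in Set.Ioo (0:ℝ) π, (g t x y 0) ^ 2)
              + ℓ₀ ^ 2 * ∫ x in G, ∫ y in Set.Ioo (0:ℝ) π, (u x y) ^ 2)
          + l2sq ω' * ∫ x in G, ∫ y in Set.Ioo (0:ℝ) π, (uy x y) ^ 2) := by
  have hKG : IsCompact (closure G) := hGbdd.isCompact_closure
  have hωc : ContinuousOn ω (Set.Icc 0 π) := fun y hy =>
    (hω_diff y hy).continuousAt.continuousWithinAt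
  -- Integrability on `G` of the four terms of the majorant.
  have ia : IntegrableOn (fun x => (a t x) ^ 2) G := by
    have : ContinuousOn (fun x => a t x) (closure G) :=
      ha_cont.comp (f := fun x => (t, x)) (by fun_prop) fun x hx => ⟨ht, hx⟩
    exact ((this.pow 2).integrableOn_compact hKG).mono_set subset_closure
  have ig : IntegrableOn (fun x => l2sq fun y => g t x y 0) G := by
    have hc : ContinuousOn (fun p : (Fin n → ℝ) × ℝ => g t p.1 p.2 0)
        (closure G ×ˢ Set.Icc 0 π) :=
      (hg_cont 0).comp (f := fun p : (Fin n → ℝ) × ℝ => (t, p.1, p.2)) (by fun_prop)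
        fun p hp => ⟨ht, hp.1, hp.2⟩
    exact integrableOn_inner (F := fun p => (g t p.1 p.2 0) ^ 2)
      (((hc.pow 2).integrableOn_compact (hKG.prod isCompact_Icc)).mono_set
        (Set.prod_mono subset_closure Set.Ioo_subset_Icc_self))
  have iu : IntegrableOn (fun x => l2sq (u x)) G := integrableOn_inner hu_L2
  have iy : IntegrableOn (fun x => l2sq (uy x)) G := integrableOn_inner huy_L2
  have iu' := iu.const_mul (ℓ₀ ^ 2)
  have igu : IntegrableOn (fun x => 2 * l2sq ω *
      ((l2sq fun y => g t x y 0) + ℓ₀ ^ 2 * l2sq (u x))) G :=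
    (ig.add iu').const_mul (2 * l2sq ω)
  have iy' := iy.const_mul (l2sq ω')
  have iagu : IntegrableOn (fun x => (a t x) ^ 2 + 2 * l2sq ω *
      ((l2sq fun y => g t x y 0) + ℓ₀ ^ 2 * l2sq (u x))) G := ia.add igu
  have iR : IntegrableOn (fun x => 3 * f_M ^ 2 * ((a t x) ^ 2
      + 2 * l2sq ω * ((l2sq fun y => g t x y 0) + ℓ₀ ^ 2 * l2sq (u x))
      + l2sq ω' * l2sq (uy x))) G :=
    (iagu.add iy').const_mul (3 * f_M ^ 2)
  have hpt : ∀ x ∈ G,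
      (∫ y in Set.Ioo (0:ℝ) π, (f t x y *
          ((a t x - l2ip (fun y => g t x y (u x y)) ω + l2ip (uy x) ω')
            / l2ip (f t x) ω)) ^ 2)
      ≤ 3 * f_M ^ 2 * ((a t x) ^ 2
          + 2 * l2sq ω * ((l2sq fun y => g t x y 0) + ℓ₀ ^ 2 * l2sq (u x))
          + l2sq ω' * l2sq (uy x)) := by
    intro x hxG
    have hx : x ∈ closure G := subset_closure hxG
    have hg0 : ContinuousOn (fun y => g t x y 0) (Set.Icc 0 π) :=
      (hg_cont 0).comp (f := fun y : ℝ => (t, x, y)) (by fun_prop) fun y hy => ⟨ht, hx, hy⟩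
    have huc : ContinuousOn (u x) (Set.Icc 0 π) := fun y hy =>
      (hu_diff x hx y hy).continuousAt.continuousWithinAt
    have h1 := l2ip_sq_le_of_growth (v := fun y => g t x y (u x y)) (ℓ := ℓ₀) hg0 huc hωc
      (fun y hy => by
        have h := hg_lip t ht x hx y hy (u x y) 0
        rw [sub_zero] at h
        have h' := abs_sub_abs_le_abs_sub (g t x y (u x y)) (g t x y 0)
        linarith)
    have h2 := l2ip_sq_le (huy_cont x hx) hω'_cont
    refine (integral_mul_div_sq_le (hf_ne t ht x hx) (hf_bd t ht x hx)).trans ?_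
    generalize l2ip (fun y => g t x y (u x y)) ω = b at *
    generalize l2ip (uy x) ω' = c at *
    have h3 : (a t x - b + c) ^ 2 ≤ 3 * ((a t x) ^ 2 + b ^ 2 + c ^ 2) := by
      nlinarith [sq_nonneg (a t x + b), sq_nonneg (a t x - c), sq_nonneg (b + c)]
    calc f_M ^ 2 * (a t x - b + c) ^ 2
        ≤ f_M ^ 2 * (3 * ((a t x) ^ 2
          + 2 * l2sq ω * ((l2sq fun y => g t x y 0) + ℓ₀ ^ 2 * l2sq (u x))
          + l2sq ω' * l2sq (uy x))) :=
        mul_le_mul_of_nonneg_left (by linarith) (sq_nonneg _)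
      _ = _ := by ring
  have hmono := integral_mono_of_nonneg (μ := volume.restrict G)
    (.of_forall fun x => integral_nonneg fun y => sq_nonneg _) iR
    ((ae_restrict_iff' hGopen.measurableSet).2 (.of_forall hpt))
  refine hmono.trans_eq ?_
  rw [integral_const_mul, integral_add iagu iy', integral_const_mul (l2sq ω'),
    integral_add ia igu, integral_const_mul (2 * l2sq ω), integral_add ig iu',
    integral_const_mul (ℓ₀ ^ 2)]
  rfl
end
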